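/- arXiv:2011.02012 — 7 statements merged into one kernel-verified Lean document; each statement's English description precedes it below -/
import Mathlib

section
/- Let κ, θ > 0 and 0 < a < b, let φ(s) = κ⌈s⌋^a + θ⌈s⌋^b, and let φ⁻¹ : ℝ → ℝ be its inverse (which exists since φ is a strictly increasing continuous bijection of ℝ). Then lim_{s→0, s≠0} φ⁻¹(s)/⌈s⌋^{1/a} = κ^{−1/a} and lim_{|s|→∞} φ⁻¹(s)/⌈s⌋^{1/b} = θ^{−1/b}. -/
/-!
Since `φ` is odd and preserves signs, everything reduces to the magnitude `x = |ψ s|`, which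
satisfies `|s| = κ x^a + θ x^b`. Factoring out the dominant power gives the exact identities
`x / |s|^(1/a) = (κ + θ x^(b-a))^(-1/a)` and `x / |s|^(1/b) = (κ x^(a-b) + θ)^(-1/b)`.
As `s → 0` one has `x → 0` because `x ≤ (|s|/κ)^(1/a)`, and as `|s| → ∞` one has `x → ∞`, because
`κ x^a + θ x^b` is bounded when `x` is. So the brackets tend to `κ` and `θ` respectively. The lemma
`tendsto_ratio_of_factor` turns such a factorisation into the limit of the quotient.
-/


open Real Filter Topology Set

/-- Signed power: `⌈s⌋^p = sign(s)·|s|^p` (so `⌈s⌋^0 = sign s`). -/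
noncomputable def spow (s p : ℝ) : ℝ := Real.sign s * |s| ^ p

lemma sign_mul_abs_combination (κ θ a b x : ℝ) :
    κ * spow x a + θ * spow x b = Real.sign x * (κ * |x| ^ a + θ * |x| ^ b) := by
  unfold spow; ring

lemma abs_combination {κ θ a b : ℝ} (hκ : 0 < κ) (hθ : 0 < θ) (ha : 0 < a) (hb : 0 < b) (x : ℝ) :
    |κ * spow x a + θ * spow x b| = κ * |x| ^ a + θ * |x| ^ b := by
  rw [sign_mul_abs_combination]
  have h : 0 ≤ κ * |x| ^ a + θ * |x| ^ b := by positivity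
  rcases lt_trichotomy x 0 with hx | rfl | hx
  · rw [Real.sign_of_neg hx, abs_mul, abs_of_nonneg h]; simp
  · simp [Real.zero_rpow ha.ne', Real.zero_rpow hb.ne']
  · rw [Real.sign_of_pos hx, abs_mul, abs_of_nonneg h]; simp

lemma sign_combination {κ θ a b : ℝ} (hκ : 0 < κ) (hθ : 0 < θ) (x : ℝ) :
    Real.sign (κ * spow x a + θ * spow x b) = Real.sign x := by
  rw [sign_mul_abs_combination]
  rcases lt_trichotomy x 0 with hx | rfl | hx
  · have h : 0 < κ * |x| ^ a + θ * |x| ^ b := by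
      have := abs_pos.2 hx.ne
      positivity
    rw [Real.sign_of_neg hx]
    exact Real.sign_of_neg (by linarith)
  · simp
  · have h : 0 < κ * |x| ^ a + θ * |x| ^ b := by
      have := abs_pos.2 hx.ne'
      positivity
    rw [Real.sign_of_pos hx]
    exact Real.sign_of_pos (by linarith)

/-- If `x` has the sign of `s ≠ 0` and `|s| = |x| ^ p * c`, then `x / ⌈s⌋^(1/p) = c ^ (-1/p)`. -/
lemma ratio_of_factor {p c s x : ℝ} (hp : 0 < p) (hc : 0 < c) (hs : s ≠ 0)
    (hsign : Real.sign x = Real.sign s) (h : |s| = |x| ^ p * c) :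
    x / spow s (1 / p) = c ^ (-(1 / p)) := by
  have hsg : Real.sign s ≠ 0 := fun h0 => hs (Real.sign_eq_zero_iff.1 h0)
  have hx : x ≠ 0 := by
    rintro rfl
    exact hsg (by rw [← hsign, Real.sign_zero])
  have hax : 0 < |x| := abs_pos.2 hx
  have hxs : x = Real.sign s * |x| := by
    rw [← hsign]
    rcases lt_or_gt_of_ne hx with hx | hx
    · rw [Real.sign_of_neg hx, abs_of_neg hx]; ring
    · rw [Real.sign_of_pos hx, abs_of_pos hx]; ring
  have hpow : |s| ^ (1 / p) = |x| * c ^ (1 / p) := by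
    rw [h, Real.mul_rpow (by positivity) hc.le, ← Real.rpow_mul hax.le,
      mul_one_div_cancel hp.ne', Real.rpow_one]
  have hc' : 0 < c ^ (1 / p) := by positivity
  unfold spow
  rw [hpow, Real.rpow_neg hc.le]
  nth_rewrite 1 [hxs]
  field_simp

lemma tendsto_ratio_of_factor {l : Filter ℝ} {ψ c : ℝ → ℝ} {p k : ℝ} (hp : 0 < p) (hk : 0 < k)
    (hc : Tendsto c l (𝓝 k)) (hs : ∀ᶠ s in l, s ≠ 0)
    (hsign : ∀ s, Real.sign (ψ s) = Real.sign s)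
    (h : ∀ s, s ≠ 0 → |s| = |ψ s| ^ p * c s) :
    Tendsto (fun s => ψ s / spow s (1 / p)) l (𝓝 (k ^ (-(1 / p)))) := by
  refine (hc.rpow_const (Or.inl hk.ne')).congr' ?_
  filter_upwards [hs, hc.eventually_const_lt hk] with s hs hcs
  exact (ratio_of_factor hp hcs hs (hsign s) (h s hs)).symm

/-- For `κ, θ > 0` and `0 < a < b`, let `φ(s) = κ⌈s⌋^a + θ⌈s⌋^b`
and let `ψ = φ⁻¹` be its inverse (φ is a strictly increasing continuous bijection
of ℝ).  Then `lim_{s→0, s≠0} φ⁻¹(s)/⌈s⌋^{1/a} = κ^{-1/a}` and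
`lim_{|s|→∞} φ⁻¹(s)/⌈s⌋^{1/b} = θ^{-1/b}`. -/
theorem stmt2 (κ θ a b : ℝ) (hκ : 0 < κ) (hθ : 0 < θ) (ha : 0 < a) (hab : a < b)
    (φ : ℝ → ℝ) (hφ : ∀ s, φ s = κ * spow s a + θ * spow s b)
    (ψ : ℝ → ℝ) (hψl : Function.LeftInverse ψ φ) (hψr : Function.RightInverse ψ φ) :
    Tendsto (fun s => ψ s / spow s (1 / a)) (𝓝[≠] (0 : ℝ)) (𝓝 (κ ^ (-(1 / a)))) ∧
    Tendsto (fun s => ψ s / spow s (1 / b)) (Filter.comap (fun s : ℝ => |s|) Filter.atTop)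
      (𝓝 (θ ^ (-(1 / b)))) := by
  have hb : 0 < b := ha.trans hab
  have habs : ∀ s, |s| = κ * |ψ s| ^ a + θ * |ψ s| ^ b := fun s => by
    rw [← abs_combination hκ hθ ha hb, ← hφ, hψr s]
  have hsign : ∀ s, Real.sign (ψ s) = Real.sign s := fun s => by
    rw [← sign_combination (a := a) (b := b) hκ hθ, ← hφ, hψr s]
  have hpos : ∀ s, s ≠ 0 → 0 < |ψ s| := fun s hs => abs_pos.2 fun h0 =>
    hs (Real.sign_eq_zero_iff.1 (by rw [← hsign, h0, Real.sign_zero]))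
  constructor
  · refine tendsto_ratio_of_factor (c := fun s => κ + θ * |ψ s| ^ (b - a)) ha hκ ?_
      eventually_mem_nhdsWithin hsign fun s hs => ?_
    · have hbound : Tendsto (fun s : ℝ => (|s| / κ) ^ (1 / a)) (𝓝[≠] 0) (𝓝 0) := by
        have h1 : Tendsto (fun s : ℝ => |s| / κ) (𝓝[≠] 0) (𝓝 0) := by
          have : Tendsto (fun s : ℝ => |s| / κ) (𝓝 0) (𝓝 (|0| / κ)) :=
            (continuous_abs.div_const κ).tendsto 0
          simpa using this.mono_left nhdsWithin_le_nhds
        have h2 := h1.rpow_const (p := 1 / a) (Or.inr (by positivity))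
        rwa [Real.zero_rpow (by positivity)] at h2
      have hψ0 : Tendsto (fun s => |ψ s|) (𝓝[≠] 0) (𝓝 0) := by
        refine squeeze_zero (fun s => abs_nonneg _) (fun s => ?_) hbound
        have h1 : |ψ s| ^ a ≤ |s| / κ := by
          rw [le_div_iff₀ hκ, habs s]
          have : 0 ≤ θ * |ψ s| ^ b := by positivity
          linarith
        calc |ψ s| = (|ψ s| ^ a) ^ (1 / a) := by
              rw [← Real.rpow_mul (abs_nonneg _), mul_one_div_cancel ha.ne', Real.rpow_one]
          _ ≤ _ := Real.rpow_le_rpow (by positivity) h1 (by positivity)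
      have h3 := hψ0.rpow_const (p := b - a) (Or.inr (by linarith))
      rw [Real.zero_rpow (by linarith)] at h3
      simpa using (h3.const_mul θ).const_add κ
    · have := hpos s hs
      rw [mul_add, mul_left_comm, ← Real.rpow_add this, add_sub_cancel, habs s]
      ring
  · have hinf : Tendsto (fun s : ℝ => |s|) (Filter.comap (fun s : ℝ => |s|) Filter.atTop) atTop :=
      tendsto_comap
    refine tendsto_ratio_of_factor (c := fun s => κ * |ψ s| ^ (-(b - a)) + θ) hb hθ ?_
      ((hinf.eventually_gt_atTop 0).mono fun s hs => abs_pos.1 hs) hsign fun s hs => ?_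
    · have hψinf : Tendsto (fun s => |ψ s|) (Filter.comap (fun s : ℝ => |s|) Filter.atTop)
          atTop := by
        refine tendsto_atTop.2 fun M => ?_
        filter_upwards [hinf.eventually_gt_atTop (κ * |M| ^ a + θ * |M| ^ b)] with s hs
        by_contra! hlt
        have hle : |ψ s| ≤ |M| := hlt.le.trans (le_abs_self M)
        have : |s| ≤ κ * |M| ^ a + θ * |M| ^ b := by
          rw [habs s]
          gcongr
        linarith
      have h3 := (tendsto_rpow_neg_atTop (sub_pos.2 hab)).comp hψinf
      simpa using (h3.const_mul κ).add_const θ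
    · have := hpos s hs
      rw [mul_add, mul_left_comm, ← Real.rpow_add this, habs s]
      ring_nf
end

section
/- Let κ, θ > 0 and 0 < a ≤ b, let φ(s) = κ⌈s⌋^a + θ⌈s⌋^b with inverse φ⁻¹ : ℝ → ℝ. Then for every real μ ≥ b the function s ↦ ⌈φ⁻¹(s)⌋^μ is differentiable at s = 0, and for every real μ > b the function s ↦ |φ⁻¹(s)|^μ is differentiable at s = 0. -/
/-!
Write `x = ψ s`. Since both terms of `φ x` carry the sign of `x`,
`|s| = |φ x| = κ|x|^a + θ|x|^b ≥ κ|x|^a`, so `|ψ s|^μ ≤ (|s|/κ)^(μ/a)`.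
When `μ > a` the exponent exceeds `1`, and a function bounded by `C|s|^r` with `r > 1` has
derivative `0` at the origin; this settles both claims except for `μ = a = b`. In that case
`φ = (κ + θ)⌈·⌋^b`, so `⌈ψ s⌋^μ = s / (κ + θ)` is linear.
-/

open Real Filter Topology Set

theorem hasDerivAt_zero_of_abs_le_rpow {f : ℝ → ℝ} {C r : ℝ} (hr : 1 < r)
    (h : ∀ s, |f s| ≤ C * |s| ^ r) : HasDerivAt f 0 0 := by
  have h0 : f 0 = 0 := by
    have := h 0
    rw [abs_zero, Real.zero_rpow (by linarith), mul_zero] at this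
    exact abs_nonpos_iff.mp this
  rw [hasDerivAt_iff_tendsto_slope]
  have hlim : Tendsto (fun s : ℝ => C * |s| ^ (r - 1)) (𝓝[≠] 0) (𝓝 0) := by
    have hc : ContinuousAt (fun s : ℝ => C * |s| ^ (r - 1)) 0 :=
      continuousAt_const.mul (continuous_abs.continuousAt.rpow_const (Or.inr (by linarith)))
    have := hc.tendsto
    simp only [abs_zero, Real.zero_rpow (by linarith : r - 1 ≠ 0), mul_zero] at this
    exact this.mono_left nhdsWithin_le_nhds
  refine squeeze_zero_norm' ?_ hlim
  filter_upwards [self_mem_nhdsWithin] with s hs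
  have hs' : 0 < |s| := abs_pos.mpr hs
  rw [slope_def_field, h0, sub_zero, sub_zero, Real.norm_eq_abs, abs_div, div_le_iff₀ hs',
    mul_assoc, ← Real.rpow_add_one hs'.ne', sub_add_cancel]
  exact h s

theorem abs_spow_le (x p : ℝ) : |spow x p| ≤ |x| ^ p := by
  have hp : 0 ≤ |x| ^ p := Real.rpow_nonneg (abs_nonneg x) p
  rw [spow, abs_mul, abs_of_nonneg hp]
  rcases Real.sign_apply_eq x with h | h | h <;> simp [h, hp]

/-- The two terms of `φ x` have the same sign, so the first is dominated by the whole. -/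
theorem mul_abs_rpow_le {κ θ a : ℝ} (b : ℝ) (hκ : 0 < κ) (hθ : 0 < θ) (ha : 0 < a) (x : ℝ) :
    κ * |x| ^ a ≤ |κ * spow x a + θ * spow x b| := by
  rcases eq_or_ne x 0 with rfl | hx
  · simp [Real.zero_rpow ha.ne']
  have hp : 0 ≤ |x| ^ a := Real.rpow_nonneg (abs_nonneg x) a
  have hq : 0 ≤ |x| ^ b := Real.rpow_nonneg (abs_nonneg x) b
  have hsum : 0 ≤ κ * |x| ^ a + θ * |x| ^ b := by positivity
  have hsign : |Real.sign x| = 1 := by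
    rcases Real.sign_apply_eq_of_ne_zero x hx with h | h <;> simp [h]
  have he : κ * spow x a + θ * spow x b = Real.sign x * (κ * |x| ^ a + θ * |x| ^ b) := by
    unfold spow; ring
  rw [he, abs_mul, hsign, one_mul, abs_of_nonneg hsum]
  have : 0 ≤ θ * |x| ^ b := by positivity
  linarith

/-- For `κ, θ > 0` and `0 < a ≤ b`, let `φ(s) = κ⌈s⌋^a + θ⌈s⌋^b`
with inverse `ψ = φ⁻¹`.  Then for every `μ ≥ b` the function `s ↦ ⌈φ⁻¹(s)⌋^μ`
is differentiable at `s = 0`, and for every `μ > b` the function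
`s ↦ |φ⁻¹(s)|^μ` is differentiable at `s = 0`. -/
theorem stmt3 (κ θ a b : ℝ) (hκ : 0 < κ) (hθ : 0 < θ) (ha : 0 < a) (hab : a ≤ b)
    (φ : ℝ → ℝ) (hφ : ∀ s, φ s = κ * spow s a + θ * spow s b)
    (ψ : ℝ → ℝ) (hψl : Function.LeftInverse ψ φ) (hψr : Function.RightInverse ψ φ) :
    (∀ μ : ℝ, b ≤ μ → DifferentiableAt ℝ (fun s => spow (ψ s) μ) 0) ∧
    (∀ μ : ℝ, b < μ → DifferentiableAt ℝ (fun s => |ψ s| ^ μ) 0) := by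
  have hψ : ∀ s, κ * spow (ψ s) a + θ * spow (ψ s) b = s := fun s => by
    rw [← hφ]; exact hψr s
  have key : ∀ μ, 0 < μ → ∀ s, |ψ s| ^ μ ≤ (1 / κ) ^ (μ / a) * |s| ^ (μ / a) := by
    intro μ hμ s
    have h1 : |ψ s| ^ a ≤ 1 / κ * |s| := by
      have h := mul_abs_rpow_le b hκ hθ ha (ψ s)
      rw [hψ] at h
      rw [one_div_mul_eq_div, le_div_iff₀ hκ]
      linarith
    have h2 := Real.rpow_le_rpow (Real.rpow_nonneg (abs_nonneg _) a) h1 (div_pos hμ ha).le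
    rwa [← Real.rpow_mul (abs_nonneg _), mul_div_cancel₀ _ ha.ne',
      Real.mul_rpow (by positivity) (abs_nonneg s)] at h2
  refine ⟨fun μ hμ => ?_, fun μ hμ => ?_⟩
  · rcases eq_or_lt_of_le (hab.trans hμ) with h | h
    · have hb : b = a := le_antisymm (h ▸ hμ) hab
      subst h hb
      have hlin : (fun s => spow (ψ s) b) = fun s => s / (κ + θ) := by
        funext s
        rw [eq_div_iff (by positivity)]
        linarith [hψ s]
      rw [hlin]
      fun_prop
    · exact (hasDerivAt_zero_of_abs_le_rpow ((one_lt_div ha).mpr h) fun s =>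
        (abs_spow_le _ _).trans (key μ (ha.trans h) s)).differentiableAt
  · have h : a < μ := hab.trans_lt hμ
    refine (hasDerivAt_zero_of_abs_le_rpow (C := (1 / κ) ^ (μ / a)) ((one_lt_div ha).mpr h)
      fun s => ?_).differentiableAt
    rw [abs_of_nonneg (Real.rpow_nonneg (abs_nonneg _) μ)]
    exact key μ (ha.trans h) s
end

section
/- Assume additionally d₀ < d∞ (strict). Then for each i = 1,…,n the composed injection term phi_i satisfies lim_{s→0, s≠0} phi_i(s)/⌈s⌋^{r_{0,i+1}/r_{0,1}} = K_{i,0} and lim_{|s|→∞} phi_i(s)/⌈s⌋^{r_{∞,i+1}/r_{∞,1}} = K_{i,∞}, where K_{i,0} = ∏_{j=1}^{i} κ_j^{r_{0,i+1}/r_{0,j+1}} and K_{i,∞} = ∏_{j=1}^{i} θ_j^{r_{∞,i+1}/r_{∞,j+1}}. -/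
/-!
The composed injection terms are asymptotic to pure signed powers, at the origin and at infinity.

The two limits are the same argument along two filters on `ℝ`: `𝓝[≠] 0` and `comap |·| atTop`.
Along either filter `l`, one of the two powers in `varphi i` dominates, because
`r0 (i + 1) / r0 i < rinf (i + 1) / rinf i` (`ratio_lt`), so `varphi i x ∼ c ⌈x⌋^p` along `l`
(`varphi_zero`, `varphi_infty`). If `f s ∼ K ⌈s⌋^q` along `l` with `K, q > 0`, then `f` maps `l`
to `l` (`tendsto_self_zero`, `tendsto_self_infty`), and the composition of equivalents gives
`varphi i (f s) ∼ c K^p ⌈s⌋^(q p)` (`comp_step`). Iterating (`chain`), the exponents telescope and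
the constants multiply to the claimed product.
-/

open Real Filter Topology Set

lemma spow_ne_zero {s : ℝ} (hs : s ≠ 0) (p : ℝ) : spow s p ≠ 0 := by
  unfold spow
  have := (Real.rpow_pos_of_pos (abs_pos.mpr hs) p).ne'
  exact mul_ne_zero (by simpa [Real.sign_eq_zero_iff] using hs) this

lemma abs_spow {s : ℝ} (hs : s ≠ 0) (p : ℝ) : |spow s p| = |s| ^ p := by
  unfold spow
  have := Real.rpow_pos_of_pos (abs_pos.mpr hs) p
  rcases lt_or_gt_of_ne hs with h | h
  · rw [Real.sign_of_neg h, abs_mul, abs_of_pos this]; simp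
  · rw [Real.sign_of_pos h, abs_mul, abs_of_pos this]; simp

lemma spow_div_spow {s : ℝ} (hs : s ≠ 0) (a b : ℝ) : spow s b / spow s a = |s| ^ (b - a) := by
  have h0 := abs_pos.mpr hs
  have h1 : Real.sign s ≠ 0 := by simpa [Real.sign_eq_zero_iff] using hs
  unfold spow
  rw [mul_div_mul_left _ _ h1, Real.rpow_sub h0]

/-- When `x` has the sign of `s`, signed powers of `x` and `s` divide like ordinary powers. -/
lemma spow_div_spow_mul {s x q : ℝ} (hs : s ≠ 0) (h : 0 < x / spow s q) (p : ℝ) :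
    spow x p / spow s (q * p) = (x / spow s q) ^ p := by
  have hq : 0 < |s| ^ q := Real.rpow_pos_of_pos (abs_pos.mpr hs) q
  rcases lt_or_gt_of_ne hs with h0 | h0
  · simp only [spow, Real.sign_of_neg h0] at h ⊢
    have hx : x < 0 := by
      by_contra! hx
      exact absurd h (not_lt.mpr (div_nonpos_of_nonneg_of_nonpos hx (by linarith)))
    rw [Real.sign_of_neg hx, mul_div_mul_left _ _ (by norm_num), Real.rpow_mul (abs_nonneg _),
      ← Real.div_rpow (abs_nonneg _) hq.le, abs_of_neg hx, neg_one_mul, div_neg, neg_div]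
  · simp only [spow, Real.sign_of_pos h0, one_mul] at h ⊢
    have hx : 0 < x := by
      by_contra! hx
      exact absurd h (not_lt.mpr (div_nonpos_of_nonpos_of_nonneg hx hq.le))
    rw [Real.sign_of_pos hx, one_mul, Real.rpow_mul (abs_nonneg _),
      ← Real.div_rpow (abs_nonneg _) hq.le, abs_of_pos hx]

/-- Composition of asymptotic equivalents by signed powers, along a filter avoiding `0`. -/
lemma comp_step {l : Filter ℝ} (hl : ∀ᶠ s in l, s ≠ 0) {f g : ℝ → ℝ} {q p K c : ℝ}
    (hK : 0 < K) (hf : Tendsto (fun s => f s / spow s q) l (𝓝 K)) (hfl : Tendsto f l l)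
    (hg : Tendsto (fun x => g x / spow x p) l (𝓝 c)) :
    Tendsto (fun s => g (f s) / spow s (q * p)) l (𝓝 (c * K ^ p)) := by
  have h1 := (hg.comp hfl).mul (hf.rpow_const (p := p) (Or.inl hK.ne'))
  refine h1.congr' ?_
  filter_upwards [hl, hfl.eventually hl, hf.eventually (lt_mem_nhds hK)] with s hs hfs hpos
  rw [← spow_div_spow_mul hs hpos, Function.comp_apply,
    div_mul_div_cancel₀ (spow_ne_zero hfs p)]

/-- The homogeneous limit of all iterated compositions, along a filter `l` which is preserved by
every function equivalent to a positive multiple of a positive signed power. -/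
lemma chain {l : Filter ℝ} (hl : ∀ᶠ s in l, s ≠ 0)
    (hpres : ∀ (f : ℝ → ℝ) (q K : ℝ), 0 < q → 0 < K →
      Tendsto (fun s => f s / spow s q) l (𝓝 K) → Tendsto f l l)
    {n : ℕ} {r c : ℕ → ℝ} (hr : ∀ i ∈ Finset.Icc 1 (n + 1), 0 < r i)
    (hc : ∀ i ∈ Finset.Icc 1 n, 0 < c i) {varphi phi : ℕ → ℝ → ℝ}
    (hv : ∀ i ∈ Finset.Icc 1 n,
      Tendsto (fun x => varphi i x / spow x (r (i + 1) / r i)) l (𝓝 (c i)))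
    (hphi1 : ∀ s, phi 1 s = varphi 1 s)
    (hphiS : ∀ i, 1 ≤ i → i < n → ∀ s, phi (i + 1) s = varphi (i + 1) (phi i s))
    {i : ℕ} (hi : 1 ≤ i) (hin : i ≤ n) :
    Tendsto (fun s => phi i s / spow s (r (i + 1) / r 1)) l
      (𝓝 (∏ j ∈ Finset.Icc 1 i, c j ^ (r (i + 1) / r (j + 1)))) := by
  simp only [Finset.mem_Icc] at hr hc hv
  induction i, hi using Nat.le_induction with
  | base =>
    have h2 := (hr 2 ⟨by omega, by omega⟩).ne'
    simpa [hphi1, div_self h2] using hv 1 ⟨le_rfl, hin⟩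
  | succ i hi ih =>
    have hcj : ∀ j ∈ Finset.Icc 1 i, 0 < c j := fun j hj => by
      rw [Finset.mem_Icc] at hj
      exact hc j ⟨hj.1, by omega⟩
    have h1 := hr 1 ⟨by omega, by omega⟩
    have hi1 := hr (i + 1) ⟨by omega, by omega⟩
    have hi2 := hr (i + 1 + 1) ⟨by omega, by omega⟩
    have ih' := ih (by omega)
    have hK : 0 < ∏ j ∈ Finset.Icc 1 i, c j ^ (r (i + 1) / r (j + 1)) :=
      Finset.prod_pos fun j hj => Real.rpow_pos_of_pos (hcj j hj) _
    have h := comp_step hl hK ih' (hpres _ _ _ (div_pos hi1 h1) hK ih')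
      (hv (i + 1) ⟨by omega, hin⟩)
    have e1 : r (i + 1) / r 1 * (r (i + 1 + 1) / r (i + 1)) = r (i + 1 + 1) / r 1 := by
      field_simp
    have e2 : c (i + 1) * (∏ j ∈ Finset.Icc 1 i, c j ^ (r (i + 1) / r (j + 1))) ^
          (r (i + 1 + 1) / r (i + 1)) =
        ∏ j ∈ Finset.Icc 1 (i + 1), c j ^ (r (i + 1 + 1) / r (j + 1)) := by
      rw [Finset.prod_Icc_succ_top (by omega), div_self hi2.ne', Real.rpow_one, mul_comm,
        ← Real.finsetProd_rpow _ _ fun j hj => (Real.rpow_pos_of_pos (hcj j hj) _).le]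
      congr 1
      refine Finset.prod_congr rfl fun j hj => ?_
      rw [← Real.rpow_mul (hcj j hj).le]
      congr 1
      field_simp
    rw [e1, e2] at h
    simpa only [hphiS i hi (by omega)] using h

lemma eventually_ne_infty : ∀ᶠ s in comap (fun s : ℝ => |s|) atTop, s ≠ 0 := by
  filter_upwards [tendsto_comap.eventually (eventually_gt_atTop (0 : ℝ))] with s hs
  exact abs_pos.mp hs

lemma tendsto_abs_rpow_zero {q : ℝ} (hq : 0 < q) :
    Tendsto (fun s : ℝ => |s| ^ q) (𝓝[≠] 0) (𝓝 0) := by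
  have h : Tendsto (fun s : ℝ => |s| ^ q) (𝓝 0) (𝓝 (|(0 : ℝ)| ^ q)) :=
    (continuous_abs.tendsto 0).rpow_const (Or.inr hq.le)
  rw [abs_zero, Real.zero_rpow hq.ne'] at h
  exact h.mono_left nhdsWithin_le_nhds

lemma tendsto_self_zero (f : ℝ → ℝ) (q K : ℝ) (hq : 0 < q) (hK : 0 < K)
    (h : Tendsto (fun s => f s / spow s q) (𝓝[≠] 0) (𝓝 K)) : Tendsto f (𝓝[≠] 0) (𝓝[≠] 0) := by
  refine tendsto_nhdsWithin_iff.mpr ⟨?_, ?_⟩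
  · rw [tendsto_zero_iff_abs_tendsto_zero]
    have h1 := h.abs.mul (tendsto_abs_rpow_zero hq)
    rw [mul_zero] at h1
    refine h1.congr' ?_
    filter_upwards [self_mem_nhdsWithin] with s hs
    rw [← abs_spow hs, ← abs_mul, div_mul_cancel₀ _ (spow_ne_zero hs q), Function.comp_apply]
  · filter_upwards [h.eventually (lt_mem_nhds hK)] with s hs h0
    simp [show f s = 0 from h0] at hs

lemma tendsto_self_infty (f : ℝ → ℝ) (q K : ℝ) (hq : 0 < q) (hK : 0 < K)
    (h : Tendsto (fun s => f s / spow s q) (comap (fun s : ℝ => |s|) atTop) (𝓝 K)) :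
    Tendsto f (comap (fun s : ℝ => |s|) atTop) (comap (fun s : ℝ => |s|) atTop) := by
  rw [tendsto_comap_iff]
  have h1 := h.abs.pos_mul_atTop (abs_pos.mpr hK.ne')
    ((tendsto_rpow_atTop hq).comp tendsto_comap)
  refine h1.congr' ?_
  filter_upwards [eventually_ne_infty] with s hs
  simp only [Function.comp_apply]
  rw [← abs_spow hs, ← abs_mul, div_mul_cancel₀ _ (spow_ne_zero hs q)]

lemma add_spow_div {x : ℝ} (hx : x ≠ 0) (k t a b : ℝ) :
    (k * spow x a + t * spow x b) / spow x a = k + t * |x| ^ (b - a) := by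
  rw [add_div, mul_div_assoc, mul_div_assoc, div_self (spow_ne_zero hx a), spow_div_spow hx,
    mul_one]

lemma varphi_zero {k t a b : ℝ} (hab : a < b) :
    Tendsto (fun x => (k * spow x a + t * spow x b) / spow x a) (𝓝[≠] 0) (𝓝 k) := by
  have h := ((tendsto_abs_rpow_zero (sub_pos.mpr hab)).const_mul t).const_add k
  rw [mul_zero, add_zero] at h
  refine h.congr' ?_
  filter_upwards [self_mem_nhdsWithin] with x hx
  exact (add_spow_div hx k t a b).symm

lemma varphi_infty {k t a b : ℝ} (hab : a < b) :
    Tendsto (fun x => (k * spow x a + t * spow x b) / spow x b)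
      (comap (fun s : ℝ => |s|) atTop) (𝓝 t) := by
  have h0 := (tendsto_rpow_neg_atTop (sub_pos.mpr hab)).comp
    (tendsto_comap (f := fun s : ℝ => |s|))
  have h := (h0.const_mul k).const_add t
  rw [mul_zero, add_zero] at h
  refine h.congr' ?_
  filter_upwards [eventually_ne_infty] with x hx
  rw [add_comm (k * _), add_spow_div hx, Function.comp_apply, neg_sub]

/-- All weights `1 - (n - i) d`, `1 ≤ i ≤ n + 1`, are positive. -/
lemma weight_pos {n : ℕ} (hn : 2 ≤ n) {d : ℝ} (h1 : -1 < d) (h2 : d < 1 / ((n : ℝ) - 1))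
    {i : ℕ} (hi : 1 ≤ i) (hin : i ≤ n + 1) : 0 < 1 - ((n : ℝ) - i) * d := by
  have hn' : (2 : ℝ) ≤ n := by exact_mod_cast hn
  have hi' : (1 : ℝ) ≤ i := by exact_mod_cast hi
  have hin' : (i : ℝ) ≤ n + 1 := by exact_mod_cast hin
  rw [lt_div_iff₀ (by linarith)] at h2
  -- The weight is affine in `i`, hence positive between its positive end values.
  by_cases hd : 0 ≤ d
  · nlinarith
  · nlinarith

/-- The exponent `r (i + 1) / r i = 1 + d / r i` is strictly increasing in `d`. -/
lemma ratio_lt {m d e : ℝ} (hde : d < e) (h1 : 0 < 1 - m * d) (h2 : 0 < 1 - m * e) :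
    (1 - (m - 1) * d) / (1 - m * d) < (1 - (m - 1) * e) / (1 - m * e) := by
  rw [div_lt_div_iff₀ h1 h2]
  nlinarith

/-- In the setting of the bl-homogeneous differentiator
(`n ≥ 2`, `−1 < d₀ < d∞ < 1/(n−1)`, weights `r_{0,i} = 1−(n−i)d₀`,
`r_{∞,i} = 1−(n−i)d∞`, internal gains `κ_i, θ_i > 0`,
`varphi_i(s) = κ_i⌈s⌋^{r_{0,i+1}/r_{0,i}} + θ_i⌈s⌋^{r_{∞,i+1}/r_{∞,i}}`,
`phi_i = varphi_i ∘ ⋯ ∘ varphi_1`), each `phi_i` is homogeneous in the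
0-limit and in the ∞-limit:
`lim_{s→0,s≠0} phi_i(s)/⌈s⌋^{r_{0,i+1}/r_{0,1}} = K_{i,0}` and
`lim_{|s|→∞} phi_i(s)/⌈s⌋^{r_{∞,i+1}/r_{∞,1}} = K_{i,∞}`, where
`K_{i,0} = ∏_{j=1}^{i} κ_j^{r_{0,i+1}/r_{0,j+1}}` and
`K_{i,∞} = ∏_{j=1}^{i} θ_j^{r_{∞,i+1}/r_{∞,j+1}}`. -/
theorem stmt4 (n : ℕ) (hn : 2 ≤ n) (d0 dinf : ℝ)
    (hd0 : -1 < d0) (hdd : d0 < dinf) (hdinf : dinf < 1 / ((n : ℝ) - 1))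
    (r0 rinf : ℕ → ℝ)
    (hr0 : ∀ i, r0 i = 1 - ((n : ℝ) - i) * d0)
    (hrinf : ∀ i, rinf i = 1 - ((n : ℝ) - i) * dinf)
    (κ θ : ℕ → ℝ)
    (hκ : ∀ i ∈ Finset.Icc 1 n, 0 < κ i) (hθ : ∀ i ∈ Finset.Icc 1 n, 0 < θ i)
    (varphi : ℕ → ℝ → ℝ)
    (hvarphi : ∀ i ∈ Finset.Icc 1 n, ∀ s,
      varphi i s = κ i * spow s (r0 (i + 1) / r0 i) + θ i * spow s (rinf (i + 1) / rinf i))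
    (phi : ℕ → ℝ → ℝ)
    (hphi1 : ∀ s, phi 1 s = varphi 1 s)
    (hphiS : ∀ i, 1 ≤ i → i < n → ∀ s, phi (i + 1) s = varphi (i + 1) (phi i s)) :
    ∀ i ∈ Finset.Icc 1 n,
      Tendsto (fun s => phi i s / spow s (r0 (i + 1) / r0 1)) (𝓝[≠] (0 : ℝ))
        (𝓝 (∏ j ∈ Finset.Icc 1 i, κ j ^ (r0 (i + 1) / r0 (j + 1)))) ∧
      Tendsto (fun s => phi i s / spow s (rinf (i + 1) / rinf 1))
        (Filter.comap (fun s : ℝ => |s|) Filter.atTop)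
        (𝓝 (∏ j ∈ Finset.Icc 1 i, θ j ^ (rinf (i + 1) / rinf (j + 1)))) := by
  have hw0 : ∀ i ∈ Finset.Icc 1 (n + 1), 0 < r0 i := fun i hi => by
    rw [Finset.mem_Icc] at hi
    rw [hr0]
    exact weight_pos hn hd0 (hdd.trans hdinf) hi.1 hi.2
  have hwinf : ∀ i ∈ Finset.Icc 1 (n + 1), 0 < rinf i := fun i hi => by
    rw [Finset.mem_Icc] at hi
    rw [hrinf]
    exact weight_pos hn (hd0.trans hdd) hdinf hi.1 hi.2
  have hlt : ∀ i ∈ Finset.Icc 1 n, r0 (i + 1) / r0 i < rinf (i + 1) / rinf i := fun i hi => by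
    have hi' : i ∈ Finset.Icc 1 (n + 1) := by
      rw [Finset.mem_Icc] at hi ⊢
      omega
    have h1 := hw0 i hi'
    have h2 := hwinf i hi'
    rw [hr0] at h1
    rw [hrinf] at h2
    have h := ratio_lt hdd h1 h2
    rw [hr0, hr0, hrinf, hrinf]
    push_cast
    simpa only [sub_sub] using h
  intro i hi
  rw [Finset.mem_Icc] at hi
  constructor
  · refine chain self_mem_nhdsWithin tendsto_self_zero hw0 hκ (fun j hj => ?_) hphi1 hphiS
      hi.1 hi.2
    simp only [hvarphi j hj]
    exact varphi_zero (hlt j hj)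
  · refine chain eventually_ne_infty tendsto_self_infty hwinf hθ (fun j hj => ?_) hphi1 hphiS
      hi.1 hi.2
    simp only [hvarphi j hj]
    exact varphi_infty (hlt j hj)
end

section
/- Let φ : ℝ → ℝ be a strictly increasing continuous bijection with inverse φ⁻¹, let β₀, β∞ > 0, and let p₀ > r₀ > 0 and p∞ > r∞ > 0. Define, for (z, w) ∈ ℝ², Z(z, w) := Σ_{j∈{0,∞}} β_j [ (r_j/p_j)|z|^{p_j/r_j} − z·⌈ξ⌋^{(p_j−r_j)/r_j} + ((p_j−r_j)/p_j)|ξ|^{p_j/r_j} ], where ξ := φ⁻¹(w). Then Z(z, w) ≥ 0 for all (z, w), and Z(z, w) = 0 if and only if φ(z) = w. -/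
/-!
Writing `ξ = ψ w`, each of the two brackets is the defect in Young's inequality for the conjugate
exponents `p / r` and `p / (p - r)`, applied to `|z|` and `|ξ| ^ ((p - r) / r)`, plus the
nonnegative quantity `|z| |ξ| ^ ((p - r) / r) - z ⌈ξ⌋ ^ ((p - r) / r)`. The first vanishes exactly
when `|z| = |ξ|`, and then the second vanishes exactly when `z` and `ξ` have the same sign. Hence
each bracket is nonnegative and vanishes exactly when `z = ξ`, and `z = ψ w` means `φ z = w`.
-/

open Real Filter Topology Set

/-- A single summand is nonnegative, and vanishes exactly on the diagonal. -/
lemma young_term (z x p r : ℝ) (hr : 0 < r) (hp : r < p) :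
    0 ≤ (r / p) * |z| ^ (p / r) - z * spow x ((p - r) / r) + ((p - r) / p) * |x| ^ (p / r) ∧
    ((r / p) * |z| ^ (p / r) - z * spow x ((p - r) / r) + ((p - r) / p) * |x| ^ (p / r) = 0 ↔
      z = x) := by
  have hp0 : 0 < p := hr.trans hp
  have hd : 0 < p - r := sub_pos.2 hp
  have hm : 0 < p / r := div_pos hp0 hr
  have hconj : (p / r).HolderConjugate (p / (p - r)) := by
    rw [Real.holderConjugate_iff]
    refine ⟨(one_lt_div hr).2 hp, ?_⟩
    field_simp
    ring
  have hb : 0 ≤ |x| ^ ((p - r) / r) := Real.rpow_nonneg (abs_nonneg x) _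
  have hbq : (|x| ^ ((p - r) / r)) ^ (p / (p - r)) = |x| ^ (p / r) := by
    rw [← Real.rpow_mul (abs_nonneg x)]
    congr 1
    field_simp
  have hY := Real.young_inequality_of_nonneg (abs_nonneg z) hb hconj
  have hE := Real.young_inequality_eq_iff_of_nonneg (abs_nonneg z) hb hconj
  rw [hbq] at hY hE
  have e1 : |z| ^ (p / r) / (p / r) = (r / p) * |z| ^ (p / r) := by field_simp
  have e2 : |x| ^ (p / r) / (p / (p - r)) = ((p - r) / p) * |x| ^ (p / r) := by field_simp
  rw [e1, e2] at hY hE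
  rw [Real.rpow_left_inj (abs_nonneg z) (abs_nonneg x) hm.ne'] at hE
  have hs : z * Real.sign x ≤ |z| := by
    rcases Real.sign_apply_eq x with h | h | h <;> rw [h]
    · linarith [neg_le_abs z]
    · simp
    · linarith [le_abs_self z]
  have hz : z * spow x ((p - r) / r) ≤ |z| * |x| ^ ((p - r) / r) := by
    unfold spow
    rw [← mul_assoc]
    exact mul_le_mul_of_nonneg_right hs hb
  refine ⟨by linarith, fun h => ?_, ?_⟩
  · have habs : |z| = |x| := hE.1 (by linarith)
    have hsgn : z * spow x ((p - r) / r) = |z| * |x| ^ ((p - r) / r) := by linarith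
    rcases eq_or_ne x 0 with rfl | hx
    · simpa using habs
    · have hbpos : 0 < |x| ^ ((p - r) / r) := Real.rpow_pos_of_pos (abs_pos.2 hx) _
      unfold spow at hsgn
      rw [← mul_assoc] at hsgn
      have h1 := mul_right_cancel₀ hbpos.ne' hsgn
      rw [habs] at h1
      rcases hx.lt_or_gt with h0 | h0
      · rw [Real.sign_of_neg h0, abs_of_neg h0] at h1
        linarith
      · rw [Real.sign_of_pos h0, abs_of_pos h0] at h1
        linarith
  · rintro rfl
    have h1 : z * spow z ((p - r) / r) = |z| * |z| ^ ((p - r) / r) := by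
      unfold spow
      rw [← mul_assoc]
      rcases lt_trichotomy z 0 with h | h | h
      · rw [Real.sign_of_neg h, abs_of_neg h]; ring
      · simp [h]
      · rw [Real.sign_of_pos h, abs_of_pos h]; ring
    linarith [hE.2 rfl]

/-- Lemma 1 of the paper: Let `φ : ℝ → ℝ` be a strictly increasing
continuous bijection with inverse `ψ = φ⁻¹`, let `β₀, β∞ > 0`, `p₀ > r₀ > 0`,
`p∞ > r∞ > 0`, and define
`Z(z,w) = Σ_{j∈{0,∞}} β_j [ (r_j/p_j)|z|^{p_j/r_j} − z·⌈ξ⌋^{(p_j−r_j)/r_j}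
 + ((p_j−r_j)/p_j)|ξ|^{p_j/r_j} ]` with `ξ = φ⁻¹(w)`.
Then `Z(z,w) ≥ 0`, and `Z(z,w) = 0` iff `φ(z) = w`. -/
theorem stmt6 (φ : ℝ → ℝ) (hmono : StrictMono φ) (hcont : Continuous φ)
    (hbij : Function.Bijective φ)
    (ψ : ℝ → ℝ) (hψl : Function.LeftInverse ψ φ) (hψr : Function.RightInverse ψ φ)
    (β0 βinf p0 r0 pinf rinf : ℝ) (hβ0 : 0 < β0) (hβinf : 0 < βinf)
    (hr0 : 0 < r0) (hp0 : r0 < p0) (hrinf : 0 < rinf) (hpinf : rinf < pinf)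
    (Z : ℝ → ℝ → ℝ)
    (hZ : ∀ z w, Z z w =
      β0 * ((r0 / p0) * |z| ^ (p0 / r0) - z * spow (ψ w) ((p0 - r0) / r0)
        + ((p0 - r0) / p0) * |ψ w| ^ (p0 / r0))
      + βinf * ((rinf / pinf) * |z| ^ (pinf / rinf) - z * spow (ψ w) ((pinf - rinf) / rinf)
        + ((pinf - rinf) / pinf) * |ψ w| ^ (pinf / rinf))) :
    ∀ z w : ℝ, 0 ≤ Z z w ∧ (Z z w = 0 ↔ φ z = w) := by
  intro z w
  obtain ⟨h0, e0⟩ := young_term z (ψ w) p0 r0 hr0 hp0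
  obtain ⟨h1, e1⟩ := young_term z (ψ w) pinf rinf hrinf hpinf
  rw [hZ, add_eq_zero_iff_of_nonneg (mul_nonneg hβ0.le h0) (mul_nonneg hβinf.le h1),
    mul_eq_zero, mul_eq_zero, or_iff_right hβ0.ne', or_iff_right hβinf.ne', e0, e1, and_self_iff]
  refine ⟨add_nonneg (mul_nonneg hβ0.le h0) (mul_nonneg hβinf.le h1), ?_, ?_⟩
  · rintro rfl
    exact hψr w
  · rintro rfl
    exact (hψl z).symm
end

section
/- Fix i ∈ {1,…,n−1} and set φ := varphi_i, r_0 := r_{0,i}, r_∞ := r_{∞,i}. Let β₀, β∞ > 0 and let p₀, p∞ satisfy p₀ ≥ max_{1≤j≤n} (r_{0,j}/r_{∞,j})(2r_{∞,j}+d∞), p∞ ≥ 2 max_{1≤j≤n} r_{∞,j} + d∞, and p₀/r_{0,j} < p∞/r_{∞,j} for all j. Define Z(z, w) := Σ_{j∈{0,∞}} β_j [ (r_j/p_j)|z|^{p_j/r_j} − z·⌈ξ⌋^{(p_j−r_j)/r_j} + ((p_j−r_j)/p_j)|ξ|^{p_j/r_j} ] with ξ := φ⁻¹(w). Then Z is continuously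 differentiable on ℝ², its partial derivative with respect to z equals σ(z,w) := Σ_{j∈{0,∞}} β_j ( ⌈z⌋^{(p_j−r_j)/r_j} − ⌈ξ⌋^{(p_j−r_j)/r_j} ), and whenever w = φ(z) both partial derivatives of Z vanish at (z, w). -/
/-!
Write `a_j = p_j / r_j` and `m_j = (p_j - r_j) / r_j = a_j - 1`. Up to the factor `β_j`, each summand
of `Z` is `|z|^(m+1) / (m+1) - z ⌈ξ⌋^m + m / (m+1) |ξ|^(m+1)` with `ξ = φ⁻¹(w)`. The dependence on
`z` is plainly `C¹`; the difficulty is at `w = 0`, where `φ⁻¹` need not be differentiable.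

With `φ(s) = κ⌈s⌋^a + θ⌈s⌋^b` and `a = r₀,ᵢ₊₁/r₀,ᵢ`, `b = r∞,ᵢ₊₁/r∞,ᵢ`, the hypotheses on the weights
give `0 < a ≤ b`, and those on `p₀, p∞` give `b ≤ m_j`. For `ξ ≠ 0` the chain rule yields
`d/dw ⌈ξ⌋^m = m|ξ|^(m-1) / φ'(ξ) = m|ξ|^(m-a) / (κa + θb|ξ|^(b-a)) =: G(ξ)`,
`d/dw (m/(m+1) |ξ|^(m+1)) = ξ G(ξ)`.
The exponents `m-a` and `b-a` are nonnegative, so `G` is continuous on all of `ℝ`, and a continuous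
function whose derivative extends continuously across a point is differentiable there
(`spow_inv_hasDerivAt`, `abs_inv_hasDerivAt`). The `w`-derivative of `Z` is then
`Σ β_j (ξ - z) G_j(ξ)`, which vanishes when `ξ = z`.
-/


open Real Filter Topology Set

/-! ### Signed powers -/

lemma spow_zero (p : ℝ) : spow 0 p = 0 := by simp [spow]

lemma spow_eq_max {p : ℝ} (hp : 0 < p) (s : ℝ) :
    spow s p = (max s 0) ^ p - (max (-s) 0) ^ p := by
  rcases lt_trichotomy s 0 with h | h | h
  · rw [spow, Real.sign_of_neg h, abs_of_neg h, max_eq_right h.le, max_eq_left (by linarith),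
      Real.zero_rpow hp.ne']
    ring
  · subst h; simp [spow]
  · rw [spow, Real.sign_of_pos h, abs_of_pos h, max_eq_left h.le, max_eq_right (by linarith),
      Real.zero_rpow hp.ne']
    ring

lemma continuous_spow {p : ℝ} (hp : 0 < p) : Continuous (fun s => spow s p) := by
  simp_rw [spow_eq_max hp]
  exact ((continuous_id.max continuous_const).rpow_const (fun _ => Or.inr hp.le)).sub
    ((continuous_neg.max continuous_const).rpow_const (fun _ => Or.inr hp.le))

lemma strictMono_spow {p : ℝ} (hp : 0 < p) : StrictMono (fun s => spow s p) := by
  intro s t hst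
  simp only [spow_eq_max hp]
  rcases le_or_gt t 0 with ht | ht
  · rw [max_eq_right ht, max_eq_right (by linarith : s ≤ 0),
      max_eq_left (by linarith : (0 : ℝ) ≤ -t), max_eq_left (by linarith : (0 : ℝ) ≤ -s)]
    have := Real.rpow_lt_rpow (by linarith : 0 ≤ -t) (by linarith : -t < -s) hp
    linarith
  · have h1 := Real.rpow_lt_rpow (le_max_right s 0)
      (max_lt (lt_max_of_lt_left hst) (lt_max_of_lt_left ht) : max s 0 < max t 0) hp
    have h2 := Real.rpow_le_rpow (le_max_right (-t) 0)
      (max_le_max (by linarith : -t ≤ -s) le_rfl) hp.le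
    linarith

lemma hasDerivAt_spow {s : ℝ} (hs : s ≠ 0) (p : ℝ) :
    HasDerivAt (fun s => spow s p) (p * |s| ^ (p - 1)) s := by
  rcases lt_or_gt_of_ne hs with h | h
  · have h1 : HasDerivAt (fun s : ℝ => -((-s) ^ p)) (-((-1) * p * (-s) ^ (p - 1))) s :=
      ((hasDerivAt_neg s).rpow_const (Or.inl (by linarith))).neg
    rw [abs_of_neg h]
    refine HasDerivAt.congr_deriv (h1.congr_of_eventuallyEq ?_) (by ring)
    · filter_upwards [Iio_mem_nhds h] with t ht
      rw [spow, Real.sign_of_neg ht, abs_of_neg ht]; ring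
  · have h1 := Real.hasDerivAt_rpow_const (x := s) (p := p) (Or.inl hs)
    rw [abs_of_pos h]
    refine h1.congr_of_eventuallyEq ?_
    filter_upwards [Ioi_mem_nhds h] with t ht
    rw [spow, Real.sign_of_pos ht, abs_of_pos ht]; ring

lemma abs_rpow_mul_self (s p : ℝ) : |s| ^ (p - 1) * s = spow s p := by
  rcases lt_trichotomy s 0 with h | h | h
  · have h' := h.ne
    rw [spow, Real.sign_of_neg h, Real.rpow_sub_one (abs_pos.2 h.ne).ne', abs_of_neg h]
    field_simp
  · subst h; simp [spow]
  · rw [spow, Real.sign_of_pos h, Real.rpow_sub_one (abs_pos.2 h.ne').ne', abs_of_pos h]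
    field_simp

lemma hasDerivAt_abs_rpow_spow {m : ℝ} (hm : 0 < m) (s : ℝ) :
    HasDerivAt (fun s : ℝ => |s| ^ (m + 1)) ((m + 1) * spow s m) s := by
  refine (hasDerivAt_abs_rpow s (by linarith : 1 < m + 1)).congr_deriv ?_
  rw [mul_assoc, show m + 1 - 2 = m - 1 by ring, abs_rpow_mul_self]

lemma contDiff_one_of_hasDerivAt {f g : ℝ → ℝ} (h : ∀ x, HasDerivAt f (g x) x)
    (hg : Continuous g) : ContDiff ℝ 1 f := by
  rw [contDiff_one_iff_deriv]
  refine ⟨fun x => (h x).differentiableAt, ?_⟩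
  rwa [show deriv f = g from funext fun x => (h x).deriv]

/-! ### Powers of the inverse function -/

/-- The quotient `m|ξ|^(m-1) / φ'(ξ)` for `φ(s) = κ⌈s⌋^a + θ⌈s⌋^b`, with the common factor
`|ξ|^(a-1)` cancelled so that the formula remains meaningful at `ξ = 0`. -/
noncomputable def invDeriv (κ θ a b m ξ : ℝ) : ℝ :=
  m * |ξ| ^ (m - a) / (κ * a + θ * b * |ξ| ^ (b - a))

section Inverse

variable {κ θ a b m : ℝ} {φ ψ : ℝ → ℝ}

lemma invDeriv_denom_pos (hκ : 0 < κ) (hθ : 0 < θ) (ha : 0 < a) (hab : a ≤ b) (ξ : ℝ) :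
    0 < κ * a + θ * b * |ξ| ^ (b - a) := by
  have hb : 0 < b := by linarith
  positivity

lemma continuous_invDeriv (hκ : 0 < κ) (hθ : 0 < θ) (ha : 0 < a) (hab : a ≤ b) (hbm : b ≤ m) :
    Continuous (invDeriv κ θ a b m) := by
  unfold invDeriv
  refine Continuous.div ?_ ?_ (fun ξ => (invDeriv_denom_pos hκ hθ ha hab ξ).ne')
  · exact continuous_const.mul (continuous_abs.rpow_const fun _ => Or.inr (by linarith))
  · exact continuous_const.add
      (continuous_const.mul (continuous_abs.rpow_const fun _ => Or.inr (by linarith)))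

lemma continuous_inv (hκ : 0 < κ) (hθ : 0 < θ) (ha : 0 < a) (hab : a ≤ b)
    (hφ : ∀ s, φ s = κ * spow s a + θ * spow s b)
    (hl : Function.LeftInverse ψ φ) (hr : Function.RightInverse ψ φ) : Continuous ψ := by
  have hmono : StrictMono φ := by
    intro s t hst
    have h1 := mul_lt_mul_of_pos_left (strictMono_spow ha hst) hκ
    have h2 := mul_lt_mul_of_pos_left (strictMono_spow (ha.trans_le hab) hst) hθ
    simp only at h1 h2
    rw [hφ, hφ]
    linarith
  have hψ : Monotone ψ := by
    intro x y hxy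
    rw [← hmono.le_iff_le, hr x, hr y]
    exact hxy
  exact hψ.continuous_of_surjective hl.surjective

lemma inv_ne_zero_of_ne_zero (hφ : ∀ s, φ s = κ * spow s a + θ * spow s b)
    (hr : Function.RightInverse ψ φ) {w : ℝ} (hw : w ≠ 0) : ψ w ≠ 0 := by
  intro h
  apply hw
  rw [← hr w, h, hφ]
  simp [spow_zero]

lemma hasDerivAt_inv_of_ne (hκ : 0 < κ) (hθ : 0 < θ) (ha : 0 < a) (hab : a ≤ b)
    (hφ : ∀ s, φ s = κ * spow s a + θ * spow s b)
    (hl : Function.LeftInverse ψ φ) (hr : Function.RightInverse ψ φ) {w : ℝ} (hw : w ≠ 0) :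
    HasDerivAt ψ (κ * (a * |ψ w| ^ (a - 1)) + θ * (b * |ψ w| ^ (b - 1)))⁻¹ w := by
  have hξ := inv_ne_zero_of_ne_zero hφ hr hw
  have hd : HasDerivAt φ (κ * (a * |ψ w| ^ (a - 1)) + θ * (b * |ψ w| ^ (b - 1))) (ψ w) := by
    rw [show φ = fun s => κ * spow s a + θ * spow s b from funext hφ]
    exact ((hasDerivAt_spow hξ a).const_mul κ).add ((hasDerivAt_spow hξ b).const_mul θ)
  have hb : 0 < b := ha.trans_le hab
  have hpos := abs_pos.2 hξ
  exact HasDerivAt.of_local_left_inverse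
    (continuous_inv hκ hθ ha hab hφ hl hr).continuousAt hd (by positivity)
    (Eventually.of_forall hr)

lemma mul_inv_eq_invDeriv (hκ : 0 < κ) (hθ : 0 < θ) (ha : 0 < a) (hab : a ≤ b) {ξ : ℝ}
    (hξ : ξ ≠ 0) :
    m * |ξ| ^ (m - 1) * (κ * (a * |ξ| ^ (a - 1)) + θ * (b * |ξ| ^ (b - 1)))⁻¹
      = invDeriv κ θ a b m ξ := by
  have hpos := abs_pos.2 hξ
  have h1 : |ξ| ^ (m - 1) = |ξ| ^ (m - a) * |ξ| ^ (a - 1) := by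
    rw [← Real.rpow_add hpos]; ring_nf
  have h2 : |ξ| ^ (b - 1) = |ξ| ^ (b - a) * |ξ| ^ (a - 1) := by
    rw [← Real.rpow_add hpos]; ring_nf
  have h3 : (|ξ| ^ (a - 1)) ≠ 0 := (Real.rpow_pos_of_pos hpos _).ne'
  have h4 := (invDeriv_denom_pos hκ hθ ha hab ξ).ne'
  rw [invDeriv, h1, h2, show κ * (a * |ξ| ^ (a - 1)) + θ * (b * (|ξ| ^ (b - a) * |ξ| ^ (a - 1)))
    = (κ * a + θ * b * |ξ| ^ (b - a)) * |ξ| ^ (a - 1) by ring, ← div_eq_mul_inv, ← mul_assoc,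
    mul_div_mul_right _ _ h3]

/-- `w ↦ ⌈φ⁻¹(w)⌋^m` is differentiable everywhere, including at `w = 0`, where `φ⁻¹` itself may
fail to be. -/
lemma spow_inv_hasDerivAt (hκ : 0 < κ) (hθ : 0 < θ) (ha : 0 < a) (hab : a ≤ b) (hbm : b ≤ m)
    (hφ : ∀ s, φ s = κ * spow s a + θ * spow s b)
    (hl : Function.LeftInverse ψ φ) (hr : Function.RightInverse ψ φ) (w : ℝ) :
    HasDerivAt (fun w => spow (ψ w) m) (invDeriv κ θ a b m (ψ w)) w := by
  have hc := continuous_inv hκ hθ ha hab hφ hl hr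
  refine hasDerivAt_of_hasDerivAt_of_ne' (x := 0)
    (g := fun w => invDeriv κ θ a b m (ψ w)) (fun y hy => ?_)
    ((continuous_spow (by linarith : 0 < m)).comp hc).continuousAt
    ((continuous_invDeriv hκ hθ ha hab hbm).comp hc).continuousAt w
  have hξ := inv_ne_zero_of_ne_zero hφ hr hy
  have h := (hasDerivAt_spow hξ m).comp y (hasDerivAt_inv_of_ne hκ hθ ha hab hφ hl hr hy)
  rw [mul_inv_eq_invDeriv hκ hθ ha hab hξ] at h
  exact h

/-- The companion of `spow_inv_hasDerivAt` for the even power; the derivative carries the extra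
factor `φ⁻¹(w)`, which produces the cancellation of the `w`-derivative of `Z` on `w = φ(z)`. -/
lemma abs_inv_hasDerivAt (hκ : 0 < κ) (hθ : 0 < θ) (ha : 0 < a) (hab : a ≤ b) (hbm : b ≤ m)
    (hφ : ∀ s, φ s = κ * spow s a + θ * spow s b)
    (hl : Function.LeftInverse ψ φ) (hr : Function.RightInverse ψ φ) (w : ℝ) :
    HasDerivAt (fun w => m / (m + 1) * |ψ w| ^ (m + 1)) (ψ w * invDeriv κ θ a b m (ψ w)) w := by
  have hm : 0 < m := by linarith
  have hc := continuous_inv hκ hθ ha hab hφ hl hr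
  refine hasDerivAt_of_hasDerivAt_of_ne' (x := 0)
    (g := fun w => ψ w * invDeriv κ θ a b m (ψ w)) (fun y hy => ?_)
    (continuous_const.mul (hc.abs.rpow_const fun _ => Or.inr (by linarith))).continuousAt
    (hc.mul ((continuous_invDeriv hκ hθ ha hab hbm).comp hc)).continuousAt w
  have hξ := inv_ne_zero_of_ne_zero hφ hr hy
  have h := ((hasDerivAt_abs_rpow_spow hm (ψ y)).comp y
    (hasDerivAt_inv_of_ne hκ hθ ha hab hφ hl hr hy)).const_mul (m / (m + 1))
  refine h.congr_deriv ?_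
  rw [← mul_inv_eq_invDeriv hκ hθ ha hab hξ, ← abs_rpow_mul_self]
  field_simp

/-! ### The summands of `Z` -/

/-- The summand of `Z` with weight one, in terms of `m = (p - r) / r`. -/
noncomputable def zTerm (ψ : ℝ → ℝ) (m z w : ℝ) : ℝ :=
  1 / (m + 1) * |z| ^ (m + 1) - z * spow (ψ w) m + m / (m + 1) * |ψ w| ^ (m + 1)

lemma hasDerivAt_zTerm_left (hm : 0 < m) (z w : ℝ) :
    HasDerivAt (fun z => zTerm ψ m z w) (spow z m - spow (ψ w) m) z := by
  have h := (((hasDerivAt_abs_rpow_spow hm z).const_mul (1 / (m + 1))).sub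
    ((hasDerivAt_id z).mul_const (spow (ψ w) m))).add_const (m / (m + 1) * |ψ w| ^ (m + 1))
  refine h.congr_deriv ?_
  field_simp

lemma hasDerivAt_zTerm_right (hκ : 0 < κ) (hθ : 0 < θ) (ha : 0 < a) (hab : a ≤ b) (hbm : b ≤ m)
    (hφ : ∀ s, φ s = κ * spow s a + θ * spow s b)
    (hl : Function.LeftInverse ψ φ) (hr : Function.RightInverse ψ φ) (z w : ℝ) :
    HasDerivAt (fun w => zTerm ψ m z w) ((ψ w - z) * invDeriv κ θ a b m (ψ w)) w := by
  have h := (((spow_inv_hasDerivAt hκ hθ ha hab hbm hφ hl hr w).const_mul z).const_sub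
    (1 / (m + 1) * |z| ^ (m + 1))).add (abs_inv_hasDerivAt hκ hθ ha hab hbm hφ hl hr w)
  refine h.congr_deriv ?_
  ring

lemma contDiff_zTerm (hκ : 0 < κ) (hθ : 0 < θ) (ha : 0 < a) (hab : a ≤ b) (hbm : b ≤ m)
    (hφ : ∀ s, φ s = κ * spow s a + θ * spow s b)
    (hl : Function.LeftInverse ψ φ) (hr : Function.RightInverse ψ φ) :
    ContDiff ℝ 1 (fun q : ℝ × ℝ => zTerm ψ m q.1 q.2) := by
  have hm : 0 < m := by linarith
  have hc := continuous_inv hκ hθ ha hab hφ hl hr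
  have hG := (continuous_invDeriv hκ hθ ha hab hbm).comp hc
  have h1 : ContDiff ℝ 1 (fun z : ℝ => |z| ^ (m + 1)) :=
    contDiff_one_of_hasDerivAt (hasDerivAt_abs_rpow_spow hm)
      (continuous_const.mul (continuous_spow hm))
  have h2 := contDiff_one_of_hasDerivAt (spow_inv_hasDerivAt hκ hθ ha hab hbm hφ hl hr) hG
  have h3 := contDiff_one_of_hasDerivAt (abs_inv_hasDerivAt hκ hθ ha hab hbm hφ hl hr) (hc.mul hG)
  exact ((contDiff_const.mul (h1.comp contDiff_fst)).sub
    (contDiff_fst.mul (h2.comp contDiff_snd))).add (h3.comp contDiff_snd)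

end Inverse

/-! ### Regularity of `Z` -/

/-- In the bl-homogeneous differentiator setting (`n ≥ 2`,
`−1 < d₀ ≤ d∞ < 1/(n−1)`, weights `r_{0,j} = 1−(n−j)d₀`, `r_{∞,j} = 1−(n−j)d∞`),
fix `i ∈ {1,…,n−1}` and let `φ = varphi_i`, `r₀ = r_{0,i}`, `r∞ = r_{∞,i}`.
Let `β₀, β∞ > 0` and `p₀, p∞` satisfy
`p₀ ≥ max_j (r_{0,j}/r_{∞,j})(2r_{∞,j}+d∞)`, `p∞ ≥ 2 max_j r_{∞,j} + d∞`,
`p₀/r_{0,j} < p∞/r_{∞,j}` for all `j`.  Define `Z(z,w)` as in (10) with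
`ξ = φ⁻¹(w)`.  Then `Z` is `C¹` on `ℝ²`, its partial derivative w.r.t. `z`
equals `σ(z,w) = Σ_j β_j(⌈z⌋^{(p_j−r_j)/r_j} − ⌈ξ⌋^{(p_j−r_j)/r_j})`, and at any
point with `w = φ(z)` both partial derivatives of `Z` vanish. -/
theorem stmt8 (n : ℕ) (hn : 2 ≤ n) (d0 dinf : ℝ)
    (hd0 : -1 < d0) (hdd : d0 ≤ dinf) (hdinf : dinf < 1 / ((n : ℝ) - 1))
    (r0 rinf : ℕ → ℝ)
    (hr0 : ∀ j, r0 j = 1 - ((n : ℝ) - j) * d0)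
    (hrinf : ∀ j, rinf j = 1 - ((n : ℝ) - j) * dinf)
    (κ θ : ℕ → ℝ)
    (hκ : ∀ j ∈ Finset.Icc 1 n, 0 < κ j) (hθ : ∀ j ∈ Finset.Icc 1 n, 0 < θ j)
    (varphi : ℕ → ℝ → ℝ)
    (hvarphi : ∀ j ∈ Finset.Icc 1 n, ∀ s,
      varphi j s = κ j * spow s (r0 (j + 1) / r0 j) + θ j * spow s (rinf (j + 1) / rinf j))
    (i : ℕ) (hi1 : 1 ≤ i) (hin : i ≤ n - 1)
    (β0 βinf p0 pinf : ℝ) (hβ0 : 0 < β0) (hβinf : 0 < βinf)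
    (hp0 : ∀ j ∈ Finset.Icc 1 n, (r0 j / rinf j) * (2 * rinf j + dinf) ≤ p0)
    (hpinf : ∀ j ∈ Finset.Icc 1 n, 2 * rinf j + dinf ≤ pinf)
    (hp0pinf : ∀ j ∈ Finset.Icc 1 n, p0 / r0 j < pinf / rinf j)
    (ψ : ℝ → ℝ) (hψl : Function.LeftInverse ψ (varphi i))
    (hψr : Function.RightInverse ψ (varphi i))
    (Z : ℝ → ℝ → ℝ)
    (hZ : ∀ z w, Z z w =
      β0 * ((r0 i / p0) * |z| ^ (p0 / r0 i) - z * spow (ψ w) ((p0 - r0 i) / r0 i)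
        + ((p0 - r0 i) / p0) * |ψ w| ^ (p0 / r0 i))
      + βinf * ((rinf i / pinf) * |z| ^ (pinf / rinf i) - z * spow (ψ w) ((pinf - rinf i) / rinf i)
        + ((pinf - rinf i) / pinf) * |ψ w| ^ (pinf / rinf i))) :
    ContDiff ℝ 1 (fun q : ℝ × ℝ => Z q.1 q.2) ∧
    (∀ z w : ℝ, HasDerivAt (fun z' => Z z' w)
      (β0 * (spow z ((p0 - r0 i) / r0 i) - spow (ψ w) ((p0 - r0 i) / r0 i))
        + βinf * (spow z ((pinf - rinf i) / rinf i) - spow (ψ w) ((pinf - rinf i) / rinf i))) z) ∧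
    (∀ z : ℝ, HasDerivAt (fun z' => Z z' (varphi i z)) 0 z ∧
      HasDerivAt (fun w' => Z z w') 0 (varphi i z)) := by
  have hnR : (i : ℝ) + 1 ≤ n := by
    have : i + 1 ≤ n := by omega
    exact_mod_cast this
  have hiR : (1 : ℝ) ≤ i := by exact_mod_cast hi1
  have hmem : i ∈ Finset.Icc 1 n := Finset.mem_Icc.2 ⟨hi1, by omega⟩
  have hn1 : (0 : ℝ) < (n : ℝ) - 1 := by linarith
  have hdinf' : dinf * ((n : ℝ) - 1) < 1 := (lt_div_iff₀ hn1).1 hdinf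
  have key : ∀ d N : ℝ, d ≤ dinf → 0 ≤ N → N ≤ (n : ℝ) - 1 → 0 < 1 - N * d := by
    intro d N hd hN hN'
    rcases le_or_gt d 0 with h | h
    · nlinarith
    · nlinarith
  have e0 : r0 (i + 1) = r0 i + d0 := by rw [hr0, hr0]; push_cast; ring
  have einf : rinf (i + 1) = rinf i + dinf := by rw [hrinf, hrinf]; push_cast; ring
  have h0 : 0 < r0 i := by rw [hr0]; exact key _ _ hdd (by linarith) (by linarith)
  have h0' : 0 < r0 (i + 1) := by
    rw [hr0]; push_cast; exact key _ _ hdd (by linarith) (by linarith)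
  have hi : 0 < rinf i := by rw [hrinf]; exact key _ _ le_rfl (by linarith) (by linarith)
  have ha : 0 < r0 (i + 1) / r0 i := div_pos h0' h0
  have hab : r0 (i + 1) / r0 i ≤ rinf (i + 1) / rinf i := by
    rw [div_le_div_iff₀ h0 hi, e0, einf, hr0, hrinf]
    nlinarith
  have hb : 0 < rinf (i + 1) / rinf i := ha.trans_le hab
  -- The bounds on `p₀`, `p∞` at index `i` say exactly that `m_j ≥ b`.
  have hbm0 : rinf (i + 1) / rinf i ≤ (p0 - r0 i) / r0 i := by
    have h := hp0 i hmem
    rw [le_div_iff₀ h0, einf]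
    have : r0 i / rinf i * (2 * rinf i + dinf) = (rinf i + dinf) / rinf i * r0 i + r0 i := by
      field_simp; ring
    linarith
  have hbminf : rinf (i + 1) / rinf i ≤ (pinf - rinf i) / rinf i := by
    have h := hpinf i hmem
    rw [einf]
    gcongr
    linarith
  have hp0pos : 0 < p0 := by
    have := (div_pos_iff_of_pos_right h0).1 (hb.trans_le hbm0)
    linarith
  have hpinfpos : 0 < pinf := by
    have := (div_pos_iff_of_pos_right hi).1 (hb.trans_le hbminf)
    linarith
  set m0 := (p0 - r0 i) / r0 i with hm0
  set minf := (pinf - rinf i) / rinf i with hminf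
  have ep0 : p0 / r0 i = m0 + 1 := by rw [hm0]; field_simp; ring
  have epinf : pinf / rinf i = minf + 1 := by rw [hminf]; field_simp; ring
  have c0 : r0 i / p0 = 1 / (m0 + 1) := by rw [← ep0]; field_simp
  have cinf : rinf i / pinf = 1 / (minf + 1) := by rw [← epinf]; field_simp
  have k0 : (p0 - r0 i) / p0 = m0 / (m0 + 1) := by rw [← ep0, hm0]; field_simp
  have kinf : (pinf - rinf i) / pinf = minf / (minf + 1) := by rw [← epinf, hminf]; field_simp
  have hZ' : ∀ z w, Z z w = β0 * zTerm ψ m0 z w + βinf * zTerm ψ minf z w := by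
    intro z w
    rw [hZ, ep0, epinf, c0, cinf, k0, kinf]
    rfl
  have hφ := hvarphi i hmem
  have hκi := hκ i hmem
  have hθi := hθ i hmem
  have hleft : ∀ z w : ℝ, HasDerivAt (fun z' => Z z' w)
      (β0 * (spow z m0 - spow (ψ w) m0) + βinf * (spow z minf - spow (ψ w) minf)) z := by
    intro z w
    simp_rw [hZ']
    exact ((hasDerivAt_zTerm_left (hb.trans_le hbm0) z w).const_mul β0).add
      ((hasDerivAt_zTerm_left (hb.trans_le hbminf) z w).const_mul βinf)
  refine ⟨?_, hleft, fun z => ⟨?_, ?_⟩⟩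
  · simp_rw [hZ']
    exact (contDiff_const.mul (contDiff_zTerm hκi hθi ha hab hbm0 hφ hψl hψr)).add
      (contDiff_const.mul (contDiff_zTerm hκi hθi ha hab hbminf hφ hψl hψr))
  · have h := hleft z (varphi i z)
    rw [hψl z] at h
    refine h.congr_deriv ?_
    ring
  · simp_rw [hZ']
    have h := ((hasDerivAt_zTerm_right hκi hθi ha hab hbm0 hφ hψl hψr z (varphi i z)).const_mul
      β0).add ((hasDerivAt_zTerm_right hκi hθi ha hab hbminf hφ hψl hψr z
        (varphi i z)).const_mul βinf)
    rw [hψl z] at h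
    refine h.congr_deriv ?_
    ring
end

section
/- Let η₀, η∞ > 0 and let α ∈ (0,1) and β > 1 be real numbers. Let y : [0,∞) → [0,∞) be continuous, differentiable on (0,∞), and satisfy y'(t) ≤ −η₀·y(t)^α − η∞·y(t)^β for all t > 0. Then y(t) = 0 for all t ≥ T̄, where T̄ := 1/(η₀(1−α)) + 1/(η∞(β−1)). In particular, the time at which y reaches zero is bounded by a constant independent of y(0). -/
/-!
A positive value `y t` at a time `t ≥ T̄` is refuted as follows. The solution is nonincreasing, so it
is positive on all of `[0, t]` and its real powers are differentiable on `(0, t)`. There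
`(y ^ (1 - β))' ≥ η∞ (β - 1)`, so `y ^ (1 - β)` grows by at least `1` during time
`T₁ = 1 / (η∞ (β - 1))`; it starts out positive, hence `y T₁ < 1` whatever `y 0` is. Likewise
`(y ^ (1 - α))' ≤ -η₀ (1 - α)`, so `y ^ (1 - α)` loses at least `1` during the remaining time, of
length at least `1 / (η₀ (1 - α))`. It was below `1` at `T₁`, so it would become negative.
-/

open Real Filter Topology Set

/-- scalar fixed-time comparison lemma.  Let `η₀, η∞ > 0`,
`α ∈ (0,1)`, `β > 1`, and let `y : [0,∞) → [0,∞)` be continuous, differentiable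
on `(0,∞)`, with `y'(t) ≤ −η₀ y(t)^α − η∞ y(t)^β` for `t > 0`.  Then `y(t) = 0`
for all `t ≥ T̄ := 1/(η₀(1−α)) + 1/(η∞(β−1))` — a bound independent of `y(0)`. -/
theorem stmt12 (η0 ηinf α β : ℝ) (hη0 : 0 < η0) (hηinf : 0 < ηinf)
    (hα0 : 0 < α) (hα1 : α < 1) (hβ : 1 < β)
    (y y' : ℝ → ℝ)
    (hcont : ContinuousOn y (Set.Ici 0))
    (hnonneg : ∀ t ≥ (0 : ℝ), 0 ≤ y t)
    (hderiv : ∀ t > (0 : ℝ), HasDerivAt y (y' t) t)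
    (hineq : ∀ t > (0 : ℝ), y' t ≤ -η0 * y t ^ α - ηinf * y t ^ β) :
    ∀ t ≥ 1 / (η0 * (1 - α)) + 1 / (ηinf * (β - 1)), y t = 0 := by
  intro t ht
  have hT1 : 0 < 1 / (ηinf * (β - 1)) := one_div_pos.2 (mul_pos hηinf (sub_pos.2 hβ))
  have hT0 : 0 < 1 / (η0 * (1 - α)) := one_div_pos.2 (mul_pos hη0 (sub_pos.2 hα1))
  have hT1m : ηinf * (β - 1) * (1 / (ηinf * (β - 1))) = 1 :=
    mul_one_div_cancel (mul_pos hηinf (sub_pos.2 hβ)).ne'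
  have hT0m : η0 * (1 - α) * (1 / (η0 * (1 - α))) = 1 :=
    mul_one_div_cancel (mul_pos hη0 (sub_pos.2 hα1)).ne'
  set T1 := 1 / (ηinf * (β - 1))
  set T0 := 1 / (η0 * (1 - α))
  by_contra hne
  have hyt : 0 < y t := lt_of_le_of_ne (hnonneg t (by linarith)) (Ne.symm hne)
  have hanti : AntitoneOn y (Ici 0) := by
    refine antitoneOn_of_deriv_nonpos (convex_Ici 0) hcont ?_ ?_ <;>
      intro s hs <;> rw [interior_Ici] at hs
    · exact (hderiv s hs).differentiableAt.differentiableWithinAt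
    · rw [(hderiv s hs).deriv]
      have hs0 := hnonneg s (le_of_lt hs)
      have h1 := mul_nonneg hη0.le (rpow_nonneg hs0 α)
      have h2 := mul_nonneg hηinf.le (rpow_nonneg hs0 β)
      linarith [hineq s hs]
  have hpos : ∀ s ∈ Icc 0 t, 0 < y s := fun s hs =>
    hyt.trans_le (hanti hs.1 (hs.1.trans hs.2) hs.2)
  have hpcont : ∀ γ : ℝ, ContinuousOn (fun s => y s ^ γ) (Icc 0 t) := fun γ =>
    (hcont.mono Icc_subset_Ici_self).rpow_const fun s hs => Or.inl (hpos s hs).ne'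
  have hpderiv : ∀ γ : ℝ, ∀ s ∈ interior (Icc 0 t),
      HasDerivAt (fun s => y s ^ γ) (y' s * γ * y s ^ (γ - 1)) s := fun γ s hs =>
    (hderiv s (interior_Icc (a := (0 : ℝ)) ▸ hs).1).rpow_const
      (Or.inl (hpos s (interior_subset hs)).ne')
  have hpdiff : ∀ γ : ℝ, DifferentiableOn ℝ (fun s => y s ^ γ) (interior (Icc 0 t)) :=
    fun γ s hs => (hpderiv γ s hs).differentiableAt.differentiableWithinAt
  have hT1mem : T1 ∈ Icc 0 t := ⟨hT1.le, by linarith⟩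
  have h0mem : (0 : ℝ) ∈ Icc 0 t := ⟨le_rfl, by linarith⟩
  have htmem : t ∈ Icc 0 t := ⟨by linarith, le_rfl⟩
  have hgrow : ηinf * (β - 1) * (T1 - 0) ≤ y T1 ^ (1 - β) - y 0 ^ (1 - β) := by
    refine (convex_Icc 0 t).mul_sub_le_image_sub_of_le_deriv (hpcont (1 - β)) (hpdiff (1 - β))
      (fun s hs => ?_) 0 h0mem T1 hT1mem hT1.le
    rw [(hpderiv _ s hs).deriv, show 1 - β - 1 = -β by ring]
    have hs0 := hpos s (interior_subset hs)
    have hs' : 0 < s := (interior_Icc (a := (0 : ℝ)) ▸ hs).1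
    have hle : y' s ≤ -ηinf * y s ^ β := by
      linarith [hineq s hs', mul_nonneg hη0.le (rpow_nonneg hs0.le α)]
    have hinv : y s ^ β * y s ^ (-β) = 1 := by rw [← rpow_add hs0, add_neg_cancel, rpow_zero]
    have hmul := mul_le_mul_of_nonneg_right hle
      (mul_nonneg (sub_pos.2 hβ).le (rpow_nonneg hs0.le (-β)))
    linear_combination hmul - ηinf * (β - 1) * hinv
  have hyT1 : y T1 < 1 := by
    by_contra! h
    have h1 := rpow_le_one_of_one_le_of_nonpos h (sub_nonpos.2 hβ.le)
    have h2 := rpow_pos_of_pos (hpos 0 h0mem) (1 - β)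
    linarith
  have hdecay : y t ^ (1 - α) - y T1 ^ (1 - α) ≤ -(η0 * (1 - α)) * (t - T1) := by
    refine (convex_Icc 0 t).image_sub_le_mul_sub_of_deriv_le (hpcont (1 - α)) (hpdiff (1 - α))
      (fun s hs => ?_) T1 hT1mem t htmem hT1mem.2
    rw [(hpderiv _ s hs).deriv, show 1 - α - 1 = -α by ring]
    have hs0 := hpos s (interior_subset hs)
    have hs' : 0 < s := (interior_Icc (a := (0 : ℝ)) ▸ hs).1
    have hle : y' s ≤ -η0 * y s ^ α := by
      linarith [hineq s hs', mul_nonneg hηinf.le (rpow_nonneg hs0.le β)]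
    have hinv : y s ^ α * y s ^ (-α) = 1 := by rw [← rpow_add hs0, add_neg_cancel, rpow_zero]
    have hmul := mul_le_mul_of_nonneg_right hle
      (mul_nonneg (sub_pos.2 hα1).le (rpow_nonneg hs0.le (-α)))
    linear_combination hmul - η0 * (1 - α) * hinv
  have h1 := rpow_lt_one (hpos T1 hT1mem).le hyT1 (sub_pos.2 hα1)
  have h2 := rpow_nonneg hyt.le (1 - α)
  have h3 : η0 * (1 - α) * T0 ≤ η0 * (1 - α) * (t - T1) :=
    mul_le_mul_of_nonneg_left (by linarith) (mul_pos hη0 (sub_pos.2 hα1)).le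
  linarith
end

section
/- Let α, L > 0 and set c := Lⁿ/α. Define the scaled internal gains κ̃_i := c^{d₀/r_{0,i}}·κ_i and θ̃_i := c^{d∞/r_{∞,i}}·θ_i, the scaled injections ṽarphi_i(s) := κ̃_i⌈s⌋^{r_{0,i+1}/r_{0,i}} + θ̃_i⌈s⌋^{r_{∞,i+1}/r_{∞,i}} and p̃hi_i := ṽarphi_i ∘ ⋯ ∘ ṽarphi_1. Then: (1) for every s ∈ ℝ and every i, p̃hi_i(s) = c^{−1}·phi_i(c·s); (2) if k_1,…,k_n > 0, δ : [0,∞) → ℝ is continuous, and e : [0,∞) → ℝⁿ is differentiable and satisfies the scaled error system e_i'(t) = −L^i k_i·p̃hi_i(e_1(t)) + e_{i+1}(t) for i = 1,…,n−1 and e_n'(t) = −Lⁿ k_n·p̃hi_n(e_1(t)) + δ(t), then the function ē : [0,∞) → ℝⁿ defined by ē_i(t) := (L^{n−i+1}/α)·e_i(t/L) satisfies the original error system ē_i'(t) = −k_i·phi_i(ē_1(t)) + ē_{i+1}(t) for i = 1,…,n−1 and ē_n'(t) = −k_n·phi_n(ē_1(t)) + δ(t/L)/α. -/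
/-!
Both weights satisfy `r_{j+1} = r_j + d`, so each exponent `p = r_{j+1} / r_j` equals `1 + d / r_j`.
By homogeneity `⌈c s⌋^p = c^p ⌈s⌋^p`, hence `c^{d / r_j} ⌈c⁻¹ y⌋^p = c⁻¹ ⌈y⌋^p`
(`rpow_mul_spow_inv_mul`): each scaled injection is the original one conjugated by multiplication
by `c`. Conjugation passes through compositions, which is part (1) by induction. The bound
`d < 1 / (n - 1)` makes the weights positive (`weight_pos`), so that the quotients
`r_{j+1} / r_j` are meaningful.

Part (2) is the chain rule: differentiating `L^{n-i+1} / α * e_i(t / L)` produces a factor `1 / L`,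
part (1) turns `p̃hi_i(e_1)` into `c⁻¹ phi_i(c e_1)`, and `L^{n-i} L^i / α * c⁻¹ = 1` cancels
the gain. The argument `c e_1(t / L)` is exactly the first rescaled coordinate.
-/

open Real Filter Topology Set

lemma spow_mul_left {c : ℝ} (hc : 0 < c) (s p : ℝ) : spow (c * s) p = c ^ p * spow s p := by
  have hsign : Real.sign (c * s) = Real.sign s := by
    rcases lt_trichotomy s 0 with h | h | h
    · rw [Real.sign_of_neg h, Real.sign_of_neg (mul_neg_of_pos_of_neg hc h)]
    · simp [h]
    · rw [Real.sign_of_pos h, Real.sign_of_pos (mul_pos hc h)]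
  rw [spow, spow, hsign, abs_mul, abs_of_pos hc, Real.mul_rpow hc.le (abs_nonneg s)]
  ring

/-- A weight `1 - (n - j) d` is affine in `j`, equals `1` at `j = n`, and is positive at `j = 1`
because `(n - 1) d < 1`. -/
lemma weight_pos_s16 {n j : ℕ} (hn : 2 ≤ n) (hj : j ∈ Finset.Icc 1 n) {d : ℝ}
    (hd : d < 1 / ((n : ℝ) - 1)) : 0 < 1 - ((n : ℝ) - j) * d := by
  obtain ⟨h1, h2⟩ := Finset.mem_Icc.1 hj
  have hn' : (2 : ℝ) ≤ n := by exact_mod_cast hn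
  have h1' : (1 : ℝ) ≤ j := by exact_mod_cast h1
  have h2' : (j : ℝ) ≤ n := by exact_mod_cast h2
  rw [lt_div_iff₀ (by linarith)] at hd
  rcases le_total 0 d with h | h
  · nlinarith
  · nlinarith

/-- One homogeneous term of a scaled injection is the original term conjugated by
multiplication by `c`. -/
lemma rpow_mul_spow_inv_mul {c r r' d : ℝ} (hc : 0 < c) (hr : r ≠ 0) (hr' : r' = r + d) (y : ℝ) :
    c ^ (d / r) * spow (c⁻¹ * y) (r' / r) = c⁻¹ * spow y (r' / r) := by
  have hp : d / r = r' / r - 1 := by rw [hr']; field_simp; ring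
  rw [spow_mul_left (inv_pos.2 hc), Real.inv_rpow hc.le, hp, Real.rpow_sub hc, Real.rpow_one]
  have := (Real.rpow_pos_of_pos hc (r' / r)).ne'
  field_simp

/-- gain scaling (15), continuous case: with `c = Lⁿ/α`, the
scaled injections `p̃hi_i` built from `κ̃_i = c^{d₀/r_{0,i}}κ_i`,
`θ̃_i = c^{d∞/r_{∞,i}}θ_i` satisfy (1) `p̃hi_i(s) = c⁻¹ phi_i(c s)`; and (2) if
`e` solves the scaled error system (gains `L^i k_i`, injections `p̃hi_i`,
perturbation `δ`), then `ē_i(t) = (L^{n−i+1}/α) e_i(t/L)` solves the original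
error system with perturbation `δ(t/L)/α`. -/
theorem stmt16 (n : ℕ) (hn : 2 ≤ n) (d0 dinf : ℝ)
    (hd0 : -1 < d0) (hdd : d0 ≤ dinf) (hdinf : dinf < 1 / ((n : ℝ) - 1))
    (r0 rinf : ℕ → ℝ)
    (hr0 : ∀ j, r0 j = 1 - ((n : ℝ) - j) * d0)
    (hrinf : ∀ j, rinf j = 1 - ((n : ℝ) - j) * dinf)
    (κ θ : ℕ → ℝ)
    (hκ : ∀ j ∈ Finset.Icc 1 n, 0 < κ j) (hθ : ∀ j ∈ Finset.Icc 1 n, 0 < θ j)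
    (varphi : ℕ → ℝ → ℝ)
    (hvarphi : ∀ j ∈ Finset.Icc 1 n, ∀ s,
      varphi j s = κ j * spow s (r0 (j + 1) / r0 j) + θ j * spow s (rinf (j + 1) / rinf j))
    (phi : ℕ → ℝ → ℝ)
    (hphi1 : ∀ s, phi 1 s = varphi 1 s)
    (hphiS : ∀ i, 1 ≤ i → i < n → ∀ s, phi (i + 1) s = varphi (i + 1) (phi i s))
    (α L c : ℝ) (hα : 0 < α) (hL : 0 < L) (hc : c = L ^ n / α)
    (varphit : ℕ → ℝ → ℝ)
    (hvarphit : ∀ j ∈ Finset.Icc 1 n, ∀ s,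
      varphit j s = c ^ (d0 / r0 j) * κ j * spow s (r0 (j + 1) / r0 j)
        + c ^ (dinf / rinf j) * θ j * spow s (rinf (j + 1) / rinf j))
    (phit : ℕ → ℝ → ℝ)
    (hphit1 : ∀ s, phit 1 s = varphit 1 s)
    (hphitS : ∀ i, 1 ≤ i → i < n → ∀ s, phit (i + 1) s = varphit (i + 1) (phit i s)) :
    (∀ i ∈ Finset.Icc 1 n, ∀ s : ℝ, phit i s = c⁻¹ * phi i (c * s)) ∧
    (∀ k : ℕ → ℝ, (∀ i ∈ Finset.Icc 1 n, 0 < k i) →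
      ∀ δ : ℝ → ℝ, Continuous δ →
      ∀ e : ℝ → ℕ → ℝ,
        (∀ t ≥ (0 : ℝ),
          (∀ i, 1 ≤ i → i < n →
            HasDerivAt (fun τ => e τ i) (-(L ^ i * k i) * phit i (e t 1) + e t (i + 1)) t) ∧
          HasDerivAt (fun τ => e τ n) (-(L ^ n * k n) * phit n (e t 1) + δ t) t) →
        (∀ t ≥ (0 : ℝ),
          (∀ i, 1 ≤ i → i < n →
            HasDerivAt (fun τ => L ^ (n - i + 1) / α * e (τ / L) i)
              (-k i * phi i (L ^ (n - 1 + 1) / α * e (t / L) 1)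
                + L ^ (n - (i + 1) + 1) / α * e (t / L) (i + 1)) t) ∧
          HasDerivAt (fun τ => L ^ (n - n + 1) / α * e (τ / L) n)
            (-k n * phi n (L ^ (n - 1 + 1) / α * e (t / L) 1) + δ (t / L) / α) t)) := by
  have hcpos : 0 < c := by rw [hc]; positivity
  have hconj : ∀ j ∈ Finset.Icc 1 n, ∀ y, varphit j (c⁻¹ * y) = c⁻¹ * varphi j y := by
    intro j hj y
    have e0 := rpow_mul_spow_inv_mul (r := r0 j) (r' := r0 (j + 1)) (d := d0) hcpos
      (by rw [hr0]; exact (weight_pos_s16 hn hj (hdd.trans_lt hdinf)).ne')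
      (by rw [hr0, hr0]; push_cast; ring) y
    have einf := rpow_mul_spow_inv_mul (r := rinf j) (r' := rinf (j + 1)) (d := dinf) hcpos
      (by rw [hrinf]; exact (weight_pos_s16 hn hj hdinf).ne')
      (by rw [hrinf, hrinf]; push_cast; ring) y
    rw [hvarphit j hj, hvarphi j hj]
    linear_combination κ j * e0 + θ j * einf
  have hscale : ∀ i, 1 ≤ i → i ≤ n → ∀ s : ℝ, phit i s = c⁻¹ * phi i (c * s) := by
    intro i hi
    induction i, hi using Nat.le_induction with
    | base =>
      intro h s
      rw [hphit1, hphi1, ← hconj 1 (Finset.mem_Icc.2 ⟨le_rfl, h⟩), inv_mul_cancel_left₀ hcpos.ne']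
    | succ i hi ih =>
      intro h s
      rw [hphitS i hi h, hphiS i hi h, ih (by omega), hconj (i + 1) (Finset.mem_Icc.2 ⟨by omega, h⟩)]
  refine ⟨fun i hi => hscale i (Finset.mem_Icc.1 hi).1 (Finset.mem_Icc.1 hi).2, ?_⟩
  intro k _ δ _ e he t ht
  obtain ⟨hi, hlast⟩ := he (t / L) (div_nonneg ht hL.le)
  have hchain : ∀ i v, HasDerivAt (fun τ => e τ i) v (t / L) →
      HasDerivAt (fun τ => L ^ (n - i + 1) / α * e (τ / L) i)
        (L ^ (n - i + 1) / α * (v * (1 / L))) t := by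
    intro i v hv
    exact (hv.comp t ((hasDerivAt_id t).div_const L)).const_mul _
  have hn1 : L ^ (n - 1 + 1) / α = c := by rw [hc, Nat.sub_add_cancel (by omega)]
  rw [hn1]
  constructor
  · intro i h1 hin
    convert hchain i _ (hi i h1 hin) using 1
    rw [hscale i h1 hin.le, hc]
    -- Writing `n = i + m + 1` removes the truncated subtractions in the exponents.
    obtain ⟨m, rfl⟩ := Nat.exists_eq_add_of_lt hin
    rw [show i + m + 1 - i + 1 = m + 2 by omega, show i + m + 1 - (i + 1) + 1 = m + 1 by omega]
    generalize phi i _ = P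
    field_simp
    ring
  · convert hchain n _ hlast using 1
    rw [hscale n (by omega) le_rfl, hc, Nat.sub_self]
    generalize phi n _ = P
    field_simp
    ring
end
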